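/- Let c ∈ ℚ and f_c(z) = z² + c. Then f_c has a rational point of type 2₂ if and only if c = (−ν⁴ − 2ν³ − 2ν² + 2ν − 1)/(ν² − 1)² for some ν ∈ ℚ with ν ∉ {−1, 0, 1}. In that case the set of rational points of type 2₂ for f_c is exactly the two-element set {(ν² + 1)/(ν² − 1), −(ν² + 1)/(ν² − 1)}, and f_c has rational points of exact period 2; indeed c = −3/4 − σ² with σ = (ν² + 4ν − 1)/(2(ν² − 1)). -/

import Mathlib

/-!
Write `f = fc c`. A point `w` has exact period 2 iff `w² + w + c + 1 = 0` and `f w ≠ w`, and then its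
2-cycle is `{w, -1 - w}`. If `x` has type `2₂` with `y = f x`, then `w = f y` lies on a 2-cycle and
`y` is the non-periodic preimage of `w`, that is `y = w + 1`. Hence `c = -1 + y - y²` and
`x² = y² + 1` (`hasType_iff`). The conic `x² = y² + 1` is parametrized by
`x = ±(ν² + 1)/(ν² - 1)`, `y = -2ν/(ν² - 1)`, which gives the formula for `c`.

For a given `c` there are two candidates for `y`, namely `y₀` and `1 - y₀`, one for each point of the
2-cycle. Both cannot occur: this would give rational `w, s, t` with `s² = w² + 1` and
`t² = (w + 1)² + 1`, a rational point off infinity on an elliptic curve of conductor 40 and rank 0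
(`no_two_squares`). With `U = |s| - w` and `V = |t| - (w + 1)`, the positive rational `X = U V` makes
`X (X² + 3X + 1)` a square, so `X = M²/e²` with `M⁴ + 3M²e² + e⁴` a square. The latter is impossible
for nonzero `M, e` by infinite descent (`no_quartic`), using the Pythagorean triple
`(M² + e²)² + (Me)² = N²`.
-/

/-- The quadratic map `f_c(z) = z^2 + c`. -/
def fc (c : ℚ) : ℚ → ℚ := fun z => z ^ 2 + c

/-- `x` has exact period `m` under `f`: the `m`-th iterate returns to `x`,
and no earlier iterate (with `1 ≤ k < m`) does. -/
def ExactPeriod (f : ℚ → ℚ) (m : ℕ) (x : ℚ) : Prop :=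
  f^[m] x = x ∧ ∀ k : ℕ, 1 ≤ k → k < m → f^[k] x ≠ x

/-- `x` is periodic under `f` if it has some exact period `m ≥ 1`. -/
def IsPeriodicPoint (f : ℚ → ℚ) (x : ℚ) : Prop :=
  ∃ m : ℕ, 1 ≤ m ∧ ExactPeriod f m x

/-- `x` is preperiodic under `f` if some iterate of `x` is periodic. -/
def IsPreperiodicPoint (f : ℚ → ℚ) (x : ℚ) : Prop :=
  ∃ n : ℕ, IsPeriodicPoint f (f^[n] x)

/-- `x` has type `m_n` for `f`: `f^[n] x` has exact period `m`, and `n` is the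
least nonnegative integer `k` such that `f^[k] x` is periodic. -/
def HasType (f : ℚ → ℚ) (m n : ℕ) (x : ℚ) : Prop :=
  ExactPeriod f m (f^[n] x) ∧ ∀ k : ℕ, k < n → ¬ IsPeriodicPoint f (f^[k] x)

lemma sq_mod_eight_of_odd {x : ℤ} (h : x % 2 = 1) : x ^ 2 % 8 = 1 := by
  have : x % 8 = 1 ∨ x % 8 = 3 ∨ x % 8 = 5 ∨ x % 8 = 7 := by omega
  rcases this with h | h | h | h <;> simp [pow_two, Int.mul_emod, h]

lemma sq_mod_eight_cases (x : ℤ) : x ^ 2 % 8 = 0 ∨ x ^ 2 % 8 = 1 ∨ x ^ 2 % 8 = 4 := by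
  have : x % 8 = 0 ∨ x % 8 = 1 ∨ x % 8 = 2 ∨ x % 8 = 3 ∨ x % 8 = 4 ∨ x % 8 = 5 ∨
    x % 8 = 6 ∨ x % 8 = 7 := by omega
  rcases this with h | h | h | h | h | h | h | h <;> simp [pow_two, Int.mul_emod, h]

/-- One descent step: a coprime solution `(M, e)` with `M` odd and `e` even yields a coprime
solution `(a, b)` whose product divides `e` with even cofactor. -/
lemma descent_step (M e N : ℤ) (hco : IsCoprime M e) (hM : M % 2 = 1) (he : e % 2 = 0)
    (he0 : e ≠ 0) (h : M ^ 4 + 3 * M ^ 2 * e ^ 2 + e ^ 4 = N ^ 2) :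
    ∃ a b r : ℤ, IsCoprime a b ∧ e = 2 * r * (a * b) ∧
      a ^ 4 + 3 * a ^ 2 * b ^ 2 + b ^ 4 = r ^ 2 := by
  have hM0 : M ≠ 0 := by rintro rfl; simp at hM
  have hN0 : N ≠ 0 := by
    rintro rfl
    have : 0 < M ^ 4 := by positivity
    nlinarith [sq_nonneg (M * e), sq_nonneg (e ^ 2)]
  have hpt : PythagoreanTriple (M ^ 2 + e ^ 2) (M * e) |N| := by
    unfold PythagoreanTriple
    rw [abs_mul_abs_self]
    linear_combination h
  have hgcd : Int.gcd (M ^ 2 + e ^ 2) (M * e) = 1 := by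
    rw [← Int.isCoprime_iff_gcd_eq_one]
    refine IsCoprime.mul_right ?_ ?_
    · have : IsCoprime (e ^ 2) M := hco.symm.pow_left
      rw [add_comm, sq M]
      exact this.add_mul_right_left M
    · have : IsCoprime (M ^ 2) e := hco.pow_left
      rw [sq e]
      exact this.add_mul_right_left e
  obtain ⟨e', rfl⟩ : ∃ e', e = 2 * e' := ⟨e / 2, by omega⟩
  obtain ⟨M', rfl⟩ : ∃ M', M = 2 * M' + 1 := ⟨M / 2, by omega⟩
  have hpar : ((2 * M' + 1) ^ 2 + (2 * e') ^ 2) % 4 = 1 := by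
    have : (2 * M' + 1) ^ 2 + (2 * e') ^ 2 = 4 * (M' ^ 2 + M' + e' ^ 2) + 1 := by ring
    omega
  obtain ⟨u, v, h1, h2, -, huv, hpuv, -⟩ :=
    hpt.coprime_classification' hgcd (by omega) (abs_pos.2 hN0)
  rw [← Int.isCoprime_iff_gcd_eq_one] at huv
  have hu : u % 2 = 1 := by
    rcases hpuv with ⟨hu, hv⟩ | ⟨hu, hv⟩
    · obtain ⟨u', rfl⟩ : ∃ u', u = 2 * u' := ⟨u / 2, by omega⟩
      obtain ⟨v', rfl⟩ : ∃ v', v = 2 * v' + 1 := ⟨v / 2, by omega⟩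
      have : (2 * u') ^ 2 - (2 * v' + 1) ^ 2 = 4 * (u' ^ 2 - v' ^ 2 - v') - 1 := by ring
      omega
    · exact hu
  generalize hMM : 2 * M' + 1 = M at *
  have hMe : M * e' = u * v := by linarith
  -- Split `M = p q` along the coprime factorization `u v`.
  obtain ⟨p, q, ⟨r, rfl⟩, ⟨s, rfl⟩, rfl⟩ := exists_dvd_and_dvd_of_dvd_mul (Dvd.intro _ hMe)
  obtain rfl : e' = r * s := by
    apply mul_left_cancel₀ hM0
    linear_combination hMe
  have hp0 : p ≠ 0 := left_ne_zero_of_mul hM0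
  have hps : IsCoprime p s := huv.of_mul_left_left.of_mul_right_right
  have hrq : IsCoprime r q := huv.of_mul_left_right.of_mul_right_left
  have hqs : IsCoprime q (2 * s) :=
    hco.of_mul_left_right.of_isCoprime_of_dvd_right ⟨r, by ring⟩
  have hq : q % 2 = 1 := by
    rcases Int.emod_two_eq_zero_or_one q with h' | h'
    · simp [Int.mul_emod, h'] at hM
    · exact h'
  have hr : r % 2 = 1 := by
    rcases Int.emod_two_eq_zero_or_one r with h' | h'
    · simp [Int.mul_emod, h'] at hu
    · exact h'
  have key : p ^ 2 * (r ^ 2 - q ^ 2) = s ^ 2 * (4 * r ^ 2 + q ^ 2) := by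
    linear_combination -h1
  obtain ⟨k, hk⟩ : p ^ 2 ∣ 4 * r ^ 2 + q ^ 2 :=
    (hps.pow (m := 2) (n := 2)).dvd_of_dvd_mul_left ⟨_, key.symm⟩
  have hk' : r ^ 2 - q ^ 2 = s ^ 2 * k := by
    apply mul_left_cancel₀ (pow_ne_zero 2 hp0)
    rw [key, hk]; ring
  have hk5 : k ∣ 5 := by
    have d1 : k ∣ 5 * r ^ 2 := ⟨p ^ 2 + s ^ 2, by linear_combination hk + hk'⟩
    have d2 : k ∣ 5 * q ^ 2 := ⟨p ^ 2 - 4 * s ^ 2, by linear_combination hk - 4 * hk'⟩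
    obtain ⟨x, y, hxy⟩ := hrq.pow (m := 2) (n := 2)
    have h5 : (5 : ℤ) = x * (5 * r ^ 2) + y * (5 * q ^ 2) := by linear_combination -5 * hxy
    rw [h5]
    exact dvd_add (d1.mul_left x) (d2.mul_left y)
  have hkpos : 0 < k := by
    have hq0 : q ≠ 0 := right_ne_zero_of_mul hM0
    have : 0 < p ^ 2 * k := by rw [← hk]; positivity
    exact pos_of_mul_pos_right this (by positivity)
  have hkcase : k = 1 ∨ k = 5 := by
    have := Int.le_of_dvd (by norm_num) hk5
    interval_cases k <;> revert hk5 <;> decide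
  rcases hkcase with rfl | rfl
  · -- `4 r² + q² ≡ 5 (mod 8)` is not a square.
    exfalso
    obtain ⟨r', rfl⟩ : ∃ r', r = 2 * r' + 1 := ⟨r / 2, by omega⟩
    have hq8 : q ^ 2 % 8 = 1 := sq_mod_eight_of_odd hq
    have hp8 := sq_mod_eight_cases p
    have : 4 * (2 * r' + 1) ^ 2 = 8 * (2 * r' ^ 2 + 2 * r') + 4 := by ring
    omega
  · have hpt2 : PythagoreanTriple q (2 * s) |p| := by
      unfold PythagoreanTriple
      rw [abs_mul_abs_self]
      linarith
    obtain ⟨a, b, ha, hb, -, hab, -, -⟩ :=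
      hpt2.coprime_classification' (Int.isCoprime_iff_gcd_eq_one.1 hqs) hq (abs_pos.2 hp0)
    obtain rfl : s = a * b := by linarith
    refine ⟨a, b, r, Int.isCoprime_iff_gcd_eq_one.2 hab, by ring, ?_⟩
    rw [ha] at hk'
    linear_combination -hk'

/-- Infinite descent: the product `M e` strictly decreases in absolute value along `descent_step`. -/
lemma no_quartic (M e N : ℤ) (hco : IsCoprime M e) (h0 : M * e ≠ 0) :
    M ^ 4 + 3 * M ^ 2 * e ^ 2 + e ^ 4 ≠ N ^ 2 := by
  induction hn : (M * e).natAbs using Nat.strong_induction_on generalizing M e N with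
  | _ n ih =>
  intro h
  have hM0 := left_ne_zero_of_mul h0
  have he0 := right_ne_zero_of_mul h0
  wlog hpar : M % 2 = 1 ∧ e % 2 = 0 generalizing M e
  · rcases Int.emod_two_eq_zero_or_one M with h1 | h1 <;>
      rcases Int.emod_two_eq_zero_or_one e with h2 | h2
    · exact Int.prime_two.not_isUnit
        (hco.isUnit_of_dvd' (Int.dvd_of_emod_eq_zero h1) (Int.dvd_of_emod_eq_zero h2))
    · exact this e M hco.symm (by rwa [mul_comm]) (by rwa [mul_comm]) (by linarith) he0 hM0 ⟨h2, h1⟩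
    · exact hpar ⟨h1, h2⟩
    · -- For `M`, `e` both odd the quartic is `5` modulo `8`.
      have a1 := sq_mod_eight_of_odd h1
      have a2 := sq_mod_eight_of_odd h2
      have a3 : (M ^ 4 + 3 * M ^ 2 * e ^ 2 + e ^ 4) % 8 = 5 := by
        have : M ^ 4 + 3 * M ^ 2 * e ^ 2 + e ^ 4
          = M ^ 2 * M ^ 2 + 3 * (M ^ 2 * e ^ 2) + e ^ 2 * e ^ 2 := by ring
        rw [this]
        have b1 : (M ^ 2 * M ^ 2) % 8 = 1 := by simp [Int.mul_emod, a1]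
        have b2 : (M ^ 2 * e ^ 2) % 8 = 1 := by simp [Int.mul_emod, a1, a2]
        have b3 : (e ^ 2 * e ^ 2) % 8 = 1 := by simp [Int.mul_emod, a2]
        omega
      have := sq_mod_eight_cases N
      omega
  · obtain ⟨a, b, r, hab, her, hr⟩ := descent_step M e N hco hpar.1 hpar.2 he0 h
    have hab0 : a * b ≠ 0 := by rintro h'; simp [h'] at her; exact he0 her
    refine ih _ ?_ a b r hab hab0 rfl hr
    have hr0 : r ≠ 0 := by rintro rfl; simp at her; exact he0 her
    rw [← hn, her, ← mul_assoc, Int.natAbs_mul (M * (2 * r))]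
    have h1 : 0 < (a * b).natAbs := Int.natAbs_pos.2 hab0
    have h2 : 2 ≤ (M * (2 * r)).natAbs := by
      rw [Int.natAbs_mul, Int.natAbs_mul]
      have := Int.natAbs_pos.2 hM0
      have := Int.natAbs_pos.2 hr0
      show 2 ≤ M.natAbs * (2 * r.natAbs)
      nlinarith
    nlinarith

/-- The elliptic curve `Y² = X (X² + 3 X + 1)` has no rational point with `X > 0`. -/
lemma no_point (X Y : ℚ) (hX : 0 < X) : Y ^ 2 ≠ X * (X ^ 2 + 3 * X + 1) := by
  intro h
  set m : ℤ := X.num with hm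
  set n : ℤ := (X.den : ℤ) with hn
  have hmpos : 0 < m := Rat.num_pos.2 hX
  have hnpos : 0 < n := Int.natCast_pos.2 X.den_pos
  have hmn : IsCoprime m n := by
    rw [Int.isCoprime_iff_gcd_eq_one]
    exact X.reduced
  have hXq : X = (m : ℚ) / n := by
    rw [hm, hn]; exact_mod_cast (Rat.num_div_den X).symm
  have hnq : (n : ℚ) ≠ 0 := by exact_mod_cast hnpos.ne'
  have hsq : IsSquare (m * n * (m ^ 2 + 3 * m * n + n ^ 2)) := by
    rw [← Rat.isSquare_intCast_iff]
    refine ⟨Y * n ^ 2, ?_⟩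
    push_cast
    have : Y * n ^ 2 * (Y * n ^ 2) = Y ^ 2 * (n : ℚ) ^ 4 := by ring
    rw [this, h, hXq]
    field_simp
  obtain ⟨Z, hZ⟩ := hsq
  have c1 : IsCoprime m (m ^ 2 + 3 * m * n + n ^ 2) := by
    have := (hmn.pow_right (n := 2)).add_mul_left_right (m + 3 * n)
    rwa [show n ^ 2 + m * (m + 3 * n) = m ^ 2 + 3 * m * n + n ^ 2 by ring] at this
  have c2 : IsCoprime n (m ^ 2 + 3 * m * n + n ^ 2) := by
    have := (hmn.symm.pow_right (n := 2)).add_mul_left_right (n + 3 * m)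
    rwa [show m ^ 2 + n * (n + 3 * m) = m ^ 2 + 3 * m * n + n ^ 2 by ring] at this
  have hZ' : m * n * (m ^ 2 + 3 * m * n + n ^ 2) = Z ^ 2 := by rw [hZ]; ring
  obtain ⟨M, hM⟩ := Int.sq_of_gcd_eq_one (a := m) (b := n * (m ^ 2 + 3 * m * n + n ^ 2)) (c := Z)
    (Int.isCoprime_iff_gcd_eq_one.1 (hmn.mul_right c1)) (by linarith)
  obtain ⟨e, he⟩ := Int.sq_of_gcd_eq_one (a := n) (b := m * (m ^ 2 + 3 * m * n + n ^ 2)) (c := Z)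
    (Int.isCoprime_iff_gcd_eq_one.1 (hmn.symm.mul_right c2)) (by linarith)
  obtain ⟨N, hN⟩ := Int.sq_of_gcd_eq_one (a := m ^ 2 + 3 * m * n + n ^ 2) (b := m * n) (c := Z)
    (Int.isCoprime_iff_gcd_eq_one.1 (c1.symm.mul_right c2.symm)) (by linarith)
  have hM : m = M ^ 2 := by rcases hM with h | h <;> nlinarith [sq_nonneg M]
  have he : n = e ^ 2 := by rcases he with h | h <;> nlinarith [sq_nonneg e]
  have hN : m ^ 2 + 3 * m * n + n ^ 2 = N ^ 2 := by
    rcases hN with h | h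
    · exact h
    · have : 0 < m ^ 2 + 3 * m * n + n ^ 2 := by positivity
      nlinarith [sq_nonneg N]
  have hM0 : M ≠ 0 := by rintro rfl; simp at hM; omega
  have he0 : e ≠ 0 := by rintro rfl; simp at he; omega
  rw [hM, he] at hN hmn
  refine no_quartic M e N ((IsCoprime.pow_iff two_pos two_pos).1 hmn) (mul_ne_zero hM0 he0) ?_
  linear_combination hN

/-- The differences `|s| - w` and `|t| - (w + 1)` are positive, and their product is the
`X`-coordinate of a point excluded by `no_point`. -/
lemma no_two_squares (w s t : ℚ) (hs : s ^ 2 = w ^ 2 + 1) (ht : t ^ 2 = (w + 1) ^ 2 + 1) :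
    False := by
  have pos (a z : ℚ) (h : a ^ 2 = z ^ 2 + 1) : 0 < |a| - z := by
    have : |z| < |a| := sq_lt_sq.1 (by linarith)
    linarith [le_abs_self z]
  have hU := pos s w hs
  have hV := pos t (w + 1) ht
  have hs' : (|s|) ^ 2 = w ^ 2 + 1 := by rw [sq_abs, hs]
  have ht' : (|t|) ^ 2 = (w + 1) ^ 2 + 1 := by rw [sq_abs, ht]
  obtain ⟨U, hUd⟩ : ∃ U, U = |s| - w := ⟨_, rfl⟩
  obtain ⟨V, hVd⟩ : ∃ V, V = |t| - (w + 1) := ⟨_, rfl⟩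
  rw [← hUd] at hU
  rw [← hVd] at hV
  have e1 : 2 * w * U = 1 - U ^ 2 := by
    rw [hUd]; linear_combination hs'
  have e2 : 2 * (w + 1) * V = 1 - V ^ 2 := by
    rw [hVd]; linear_combination ht'
  have key : (U - V) * (1 + U * V) = 2 * (U * V) := by
    linear_combination V * e1 - U * e2
  refine no_point (U * V) ((U + V) * (1 + U * V) / 2) (mul_pos hU hV) ?_
  -- `(U + V)² = (U - V)² + 4UV`
  linear_combination ((U - V) * (1 + U * V) + 2 * (U * V)) / 4 * key

lemma not_sq_five (q : ℚ) : q ^ 2 ≠ 5 := by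
  intro h
  have : IsSquare ((5 : ℕ) : ℚ) := ⟨q, by push_cast; linarith⟩
  rw [Rat.isSquare_natCast_iff] at this
  exact (by norm_num : Nat.Prime 5).prime.not_isSquare this

lemma exactPeriod_two_iff (c w : ℚ) :
    ExactPeriod (fc c) 2 w ↔ w ^ 2 + w + c + 1 = 0 ∧ w ^ 2 + c ≠ w := by
  have hiff : ExactPeriod (fc c) 2 w ↔ (w ^ 2 + c) ^ 2 + c = w ∧ w ^ 2 + c ≠ w := by
    constructor
    · rintro ⟨h1, h2⟩
      exact ⟨h1, h2 1 le_rfl one_lt_two⟩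
    · rintro ⟨h1, h2⟩
      refine ⟨h1, fun k hk hk' => ?_⟩
      obtain rfl : k = 1 := by omega
      exact h2
  rw [hiff]
  constructor
  · rintro ⟨h1, h2⟩
    refine ⟨mul_left_cancel₀ (sub_ne_zero.2 h2) ?_, h2⟩
    linear_combination h1
  · rintro ⟨h1, h2⟩
    exact ⟨by linear_combination (w ^ 2 + c - w) * h1, h2⟩

/-- Here `y = f_c x`. The 2-cycle is `{y - 1, -y}`, and `y ≠ 0` says that `y` is not on it; the
two points are distinct because `y = 1/2` would make `5` the square of `2 x`. -/
lemma hasType_iff (c x : ℚ) :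
    HasType (fc c) 2 2 x ↔
      ∃ y : ℚ, x ^ 2 = y ^ 2 + 1 ∧ c = -1 + y - y ^ 2 ∧ y ≠ 0 := by
  have h2 : (fc c)^[2] x = (x ^ 2 + c) ^ 2 + c := rfl
  constructor
  · rintro ⟨he, hnp⟩
    rw [h2, exactPeriod_two_iff] at he
    obtain ⟨y, hy⟩ : ∃ y, y = x ^ 2 + c := ⟨_, rfl⟩
    rw [← hy] at he
    have hyp : ¬ IsPeriodicPoint (fc c) y := by rw [hy]; exact hnp 1 one_lt_two
    obtain ⟨w, hw⟩ : ∃ w, w = y ^ 2 + c := ⟨_, rfl⟩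
    rw [← hw] at he
    obtain ⟨h1, h3⟩ := he
    have hne : y ≠ -1 - w := by
      rintro rfl
      apply hyp
      refine ⟨2, by norm_num, (exactPeriod_two_iff _ _).2 ⟨by linear_combination h1, ?_⟩⟩
      intro h4
      apply h3
      linear_combination h1 - hw - h4
    have hyw : y = 1 + w := by
      apply sub_eq_zero.1
      apply mul_left_cancel₀ (sub_ne_zero.2 hne)
      linear_combination -hw - h1
    have hc : c = -1 + y - y ^ 2 := by linarith
    refine ⟨y, by linarith, hc, ?_⟩
    rintro rfl
    apply hne
    linarith
  · rintro ⟨y, hx, hc, hy0⟩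
    have hy : x ^ 2 + c = y := by linarith
    have hyw : y ^ 2 + c = y - 1 := by linarith
    have hE : (y - 1) ^ 2 + (y - 1) + c + 1 = 0 := by linear_combination hc
    have horb : ∀ k, (fc c)^[k] (y - 1) = y - 1 ∨ (fc c)^[k] (y - 1) = -y := by
      intro k
      induction k with
      | zero => left; rfl
      | succ k ih =>
        rw [Function.iterate_succ_apply']
        rcases ih with h | h <;> rw [h]
        · right; unfold fc; linear_combination hE
        · left; unfold fc; linear_combination hE
    have hny : ∀ m, 1 ≤ m → (fc c)^[m] y ≠ y := by
      intro m hm h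
      obtain ⟨k, rfl⟩ : ∃ k, m = k + 1 := ⟨m - 1, by omega⟩
      rw [Function.iterate_succ_apply, show fc c y = y - 1 from hyw] at h
      rcases horb k with h' | h' <;> rw [h'] at h
      · linarith
      · exact hy0 (by linarith)
    refine ⟨?_, ?_⟩
    · rw [h2, hy, hyw, exactPeriod_two_iff]
      refine ⟨hE, fun h => not_sq_five (2 * x) ?_⟩
      have : y = 1 / 2 := by linarith
      subst this
      linarith
    · rintro k hk ⟨m, hm, hp, -⟩
      obtain rfl | rfl : k = 0 ∨ k = 1 := by omega
      · apply hny m hm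
        have : y = fc c x := hy.symm
        rw [this, ← Function.iterate_succ_apply, Function.iterate_succ_apply']
        exact congrArg (fc c) hp
      · rw [show (fc c)^[1] x = y from hy] at hp
        exact hny m hm hp


/-- `f_c` has a rational point of type `2₂` iff
`c = (-ν⁴-2ν³-2ν²+2ν-1)/(ν²-1)²` for some `ν ∉ {-1,0,1}`; in that case the set of rational
points of type `2₂` is exactly the two-element set `{(ν²+1)/(ν²-1), -(ν²+1)/(ν²-1)}`,
and `c = -3/4 - σ²` with `σ = (ν²+4ν-1)/(2(ν²-1))` (so `f_c` has rational points of exact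
period 2). -/
theorem stmt_8 (c : ℚ) :
    ((∃ x : ℚ, HasType (fc c) 2 2 x) ↔
      ∃ ν : ℚ, ν ≠ -1 ∧ ν ≠ 0 ∧ ν ≠ 1 ∧
        c = (-ν^4 - 2*ν^3 - 2*ν^2 + 2*ν - 1) / (ν^2 - 1)^2) ∧
    (∀ ν : ℚ, ν ≠ -1 → ν ≠ 0 → ν ≠ 1 →
      c = (-ν^4 - 2*ν^3 - 2*ν^2 + 2*ν - 1) / (ν^2 - 1)^2 →
      {x : ℚ | HasType (fc c) 2 2 x} = {(ν^2 + 1) / (ν^2 - 1), -(ν^2 + 1) / (ν^2 - 1)} ∧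
      ((ν^2 + 1) / (ν^2 - 1) : ℚ) ≠ -(ν^2 + 1) / (ν^2 - 1) ∧
      c = -3/4 - ((ν^2 + 4*ν - 1) / (2*(ν^2 - 1)))^2 ∧
      (∃ x : ℚ, ExactPeriod (fc c) 2 x)) := by
  have hden (ν : ℚ) (h1 : ν ≠ -1) (h2 : ν ≠ 1) : ν ^ 2 - 1 ≠ 0 := by
    have : ν ^ 2 - 1 = (ν - -1) * (ν - 1) := by ring
    rw [this]
    exact mul_ne_zero (sub_ne_zero.2 h1) (sub_ne_zero.2 h2)
  have hconic (ν : ℚ) (hd : ν ^ 2 - 1 ≠ 0) :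
      ((ν ^ 2 + 1) / (ν ^ 2 - 1)) ^ 2 = (-2 * ν / (ν ^ 2 - 1)) ^ 2 + 1 := by
    field_simp
    ring
  have hcy (ν : ℚ) (hd : ν ^ 2 - 1 ≠ 0)
      (hc : c = (-ν^4 - 2*ν^3 - 2*ν^2 + 2*ν - 1) / (ν^2 - 1)^2) :
      c = -1 + (-2 * ν / (ν ^ 2 - 1)) - (-2 * ν / (ν ^ 2 - 1)) ^ 2 := by
    rw [hc]
    field_simp
    ring
  have hy0 (ν : ℚ) (hd : ν ^ 2 - 1 ≠ 0) (h : ν ≠ 0) : -2 * ν / (ν ^ 2 - 1) ≠ 0 :=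
    div_ne_zero (mul_ne_zero (by norm_num) h) hd
  have hpt (ν : ℚ) (h1 : ν ≠ -1) (h0 : ν ≠ 0) (h2 : ν ≠ 1)
      (hc : c = (-ν^4 - 2*ν^3 - 2*ν^2 + 2*ν - 1) / (ν^2 - 1)^2) :
      HasType (fc c) 2 2 ((ν ^ 2 + 1) / (ν ^ 2 - 1)) :=
    (hasType_iff _ _).2 ⟨_, hconic ν (hden ν h1 h2), hcy ν (hden ν h1 h2) hc,
      hy0 ν (hden ν h1 h2) h0⟩
  refine ⟨⟨?_, ?_⟩, ?_⟩
  · rintro ⟨x, hx⟩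
    obtain ⟨y, hxy, hc, hy⟩ := (hasType_iff c x).1 hx
    have hx1 : x ≠ 1 := by
      rintro rfl
      exact hy (pow_eq_zero_iff two_ne_zero |>.1 (by linarith))
    -- `ν` is the slope of the line through `(y, x)` and the point `(0, 1)` of the conic.
    obtain ⟨ν, hν⟩ : ∃ ν, ν = (x - 1) / y := ⟨_, rfl⟩
    have hνy : ν * y = x - 1 := by rw [hν]; field_simp
    have hq : y * (ν ^ 2 - 1) = -2 * ν := by
      apply mul_left_cancel₀ hy
      linear_combination (ν * y + x + 1) * hνy + hxy
    have hν0 : ν ≠ 0 := by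
      rintro rfl
      apply hx1
      linarith
    have hd : ν ^ 2 - 1 ≠ 0 := by
      intro h
      rw [h] at hq
      apply hν0
      linarith
    refine ⟨ν, ?_, hν0, ?_, ?_⟩
    · rintro rfl; norm_num at hd
    · rintro rfl; norm_num at hd
    · have : y = -2 * ν / (ν ^ 2 - 1) := by rw [eq_div_iff hd, hq]
      rw [hc, this]
      field_simp
      ring
  · rintro ⟨ν, h1, h0, h2, hc⟩
    exact ⟨_, hpt ν h1 h0 h2 hc⟩
  · intro ν h1 h0 h2 hc
    have hd := hden ν h1 h2
    refine ⟨?_, ?_, ?_, ⟨_, (hpt ν h1 h0 h2 hc).1⟩⟩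
    · ext x
      simp only [Set.mem_ofPred_eq, Set.mem_insert_iff, Set.mem_singleton_iff]
      rw [hasType_iff, neg_div, ← sq_eq_sq_iff_eq_or_eq_neg, hconic ν hd]
      have hc' := hcy ν hd hc
      have hne := hy0 ν hd h0
      have hcon := hconic ν hd
      generalize -2 * ν / (ν ^ 2 - 1) = z at *
      constructor
      · rintro ⟨y, hxy, hcy', -⟩
        have : (y - z) * (y - (1 - z)) = 0 := by linear_combination hcy' - hc'
        rcases mul_eq_zero.1 this with h | h
        · rw [hxy, sub_eq_zero.1 h]
        · rw [sub_eq_zero.1 h] at hxy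
          exact (no_two_squares (-z) _ x (by rw [hcon]; ring) (by rw [hxy]; ring)).elim
      · intro h
        exact ⟨z, h, hc', hne⟩
    · intro h
      rw [neg_div] at h
      have h3 : (ν ^ 2 + 1) / (ν ^ 2 - 1) = 0 := by linarith
      rw [div_eq_zero_iff] at h3
      rcases h3 with h3 | h3
      · nlinarith [sq_nonneg ν]
      · exact hd h3
    · rw [hc]
      field_simp
      ring
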